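/- For every weighted undirected graph G = (V, E, w) with positive edge weights on n vertices, every integer k ≥ 1, and every real ε > 0, there exists a (β, ε)-hopset H for G of size at most C·n^{1 + 1/(2^{k+1} − 1)}, where C is an absolute constant (independent of n, k, ε), and where β = 2(r+1)^k with r = ⌈4k / ln(1+ε)⌉. -/

import Mathlib

open scoped ENNReal
open Classical

/-- Hop-bounded distance: minimum total weight of a walk with at most `β` edges. -/
noncomputable def hopDist {V : Type*} (w : V → V → ℝ≥0∞) : ℕ → V → V → ℝ≥0∞
  | 0, u, v => if u = v then 0 else ⊤
  | β + 1, u, v => hopDist w β u v ⊓ ⨅ x, w u x + hopDist w β x v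

/-- Shortest-path distance (infimum over all hop bounds). -/
noncomputable def gdist {V : Type*} (w : V → V → ℝ≥0∞) (u v : V) : ℝ≥0∞ :=
  ⨅ β, hopDist w β u v

/-- The graph `G ∪ H`: add each edge of `H` with weight equal to the `G`-distance
between its endpoints. -/
noncomputable def addShortcuts {V : Type*} (w : V → V → ℝ≥0∞) (H : Set (V × V)) :
    V → V → ℝ≥0∞ :=
  fun u v => w u v ⊓ (if (u, v) ∈ H ∨ (v, u) ∈ H then gdist w u v else ⊤)

/-- `H` is a `(β, ε)`-hopset for the graph with weight function `w`. -/
def IsHopset {V : Type*} (w : V → V → ℝ≥0∞) (H : Set (V × V)) (β : ℕ) (ε : ℝ) : Prop :=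
  ∀ u v : V,
    gdist w u v ≤ hopDist (addShortcuts w H) β u v ∧
    hopDist (addShortcuts w H) β u v ≤ ENNReal.ofReal (1 + ε) * gdist w u v

/-!
The hopset is read off a hierarchy `V = A₀, A₁, …, A_{k+1} = ∅` of vertex sets: each `a ∈ Aᵢ` is
joined to the vertices of `Aᵢ` strictly closer to it than `A_{i+1}`, and to a nearest vertex of
`A_{i+1}`. Averaging over all `s`-subsets of `Aᵢ` yields an `A_{i+1}` for which few edges arise;
the sizes `|Aᵢ| ≤ n ^ (1 - (2ⁱ - 1) / (2^{k+1} - 1)) / 2ⁱ` make the edge counts of the levels decay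
geometrically.

For the stretch, suppose that any two vertices are joined with `h` hops and stretch `α` unless the
first one reaches `Aᵢ` that cheaply. Cut a shortest path of length `D` into `r` segments of length
at most `D / r`, and scan it from both ends for the first segment that is not well approximated.
The two stuck vertices reach `z, z' ∈ Aᵢ` within `α D / r` each, and one hopset edge either joins
`z` to `z'` or leads from `z` to `A_{i+1}`. The detour costs at most `4 α D / r`, so each level
multiplies the stretch by `1 + 4 / r` and the number of hops by `r + 1`.
-/

section HopDistance

variable {V : Type*} (w : V → V → ℝ≥0∞)

theorem hopDist_antitone (u v : V) : Antitone (fun b => hopDist w b u v) :=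
  antitone_nat_of_succ_le fun _ => inf_le_left

theorem hopDist_self (b : ℕ) (u : V) : hopDist w b u u = 0 :=
  le_zero_iff.mp <| (hopDist_antitone w u u b.zero_le).trans_eq (if_pos rfl)

theorem hopDist_succ_le (b : ℕ) (u x v : V) :
    hopDist w (b + 1) u v ≤ w u x + hopDist w b x v :=
  inf_le_right.trans (iInf_le _ x)

theorem hopDist_one_le (u v : V) : hopDist w 1 u v ≤ w u v := by
  simpa only [hopDist_self, add_zero] using hopDist_succ_le w 0 u v v

theorem hopDist_add_le (a b : ℕ) (u x v : V) :
    hopDist w (a + b) u v ≤ hopDist w a u x + hopDist w b x v := by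
  induction a generalizing u with
  | zero =>
    rcases eq_or_ne u x with rfl | hux
    · simp [hopDist]
    · simp [hopDist, hux]
  | succ a ih =>
    rw [hopDist, ← min_add_add_right, ENNReal.iInf_add]
    refine le_min ((hopDist_antitone w u v (by omega)).trans (ih u)) (le_iInf fun y => ?_)
    calc hopDist w (a + 1 + b) u v
        = hopDist w (a + b + 1) u v := by rw [add_right_comm]
      _ ≤ w u y + hopDist w (a + b) y v := hopDist_succ_le w _ u y v
      _ ≤ w u y + hopDist w a y x + hopDist w b x v := by
        rw [add_assoc]
        gcongr
        exact ih y

variable {w}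

theorem hopDist_le_add {a b c : ℕ} (habc : a + b ≤ c) {u x v : V} {p q : ℝ≥0∞}
    (hp : hopDist w a u x ≤ p) (hq : hopDist w b x v ≤ q) : hopDist w c u v ≤ p + q :=
  (hopDist_antitone w u v habc).trans ((hopDist_add_le w a b u x v).trans (add_le_add hp hq))

theorem hopDist_comm (hw : ∀ u v, w u v = w v u) (b : ℕ) (u v : V) :
    hopDist w b u v = hopDist w b v u := by
  suffices h : ∀ u v, hopDist w b v u ≤ hopDist w b u v from le_antisymm (h v u) (h u v)
  intro u v
  induction b generalizing u with
  | zero => simp [hopDist, eq_comm]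
  | succ b ih =>
    conv_rhs => rw [hopDist]
    refine le_inf ((hopDist_antitone w v u b.le_succ).trans (ih u)) (le_iInf fun x => ?_)
    rw [add_comm (w u x), hw u x]
    exact hopDist_le_add le_rfl (ih x) (hopDist_one_le w x u)

variable (w)

theorem gdist_le_hopDist (b : ℕ) (u v : V) : gdist w u v ≤ hopDist w b u v :=
  iInf_le _ b

theorem gdist_self (u : V) : gdist w u u = 0 :=
  le_zero_iff.mp <| (gdist_le_hopDist w 0 u u).trans_eq (hopDist_self w 0 u)

theorem gdist_le (u v : V) : gdist w u v ≤ w u v :=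
  (gdist_le_hopDist w 1 u v).trans (hopDist_one_le w u v)

theorem gdist_triangle (u x v : V) : gdist w u v ≤ gdist w u x + gdist w x v :=
  ENNReal.le_iInf_add_iInf fun a b =>
    (gdist_le_hopDist w (a + b) u v).trans (hopDist_add_le w a b u x v)

variable {w}

theorem gdist_comm (hw : ∀ u v, w u v = w v u) (u v : V) : gdist w u v = gdist w v u :=
  iInf_congr fun b => hopDist_comm hw b u v

theorem lt_of_add_add_le {a c d p : ℝ≥0∞} (ha : a ≠ 0) (hd : d ≠ ⊤) (h : p + (a + c) ≤ d) :
    c < d := by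
  have hac : a + c ≤ d := le_add_self.trans h
  have hc : c ≠ ⊤ := ne_top_of_le_ne_top hd (le_add_self.trans hac)
  exact (ENNReal.lt_add_right hc ha).trans_le (by rwa [add_comm])

theorem exists_first_edge [Finite V] {u v : V} (huv : u ≠ v) :
    ∃ x, w u x + gdist w x v ≤ gdist w u v := by
  have : Nonempty V := ⟨u⟩
  obtain ⟨x, hx⟩ := Finite.exists_min fun x => w u x + gdist w x v
  refine ⟨x, le_iInf fun b => ?_⟩
  induction b with
  | zero => simp [hopDist, huv]
  | succ b ih =>
    exact le_inf ih (le_iInf fun y => (hx y).trans (by gcongr; exact gdist_le_hopDist w b y v))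

theorem gdist_pos [Finite V] (hpos : ∀ u v, 0 < w u v) {u v : V} (huv : u ≠ v) :
    0 < gdist w u v := by
  obtain ⟨x, hx⟩ := exists_first_edge (w := w) huv
  exact (hpos u x).trans_le (le_self_add.trans hx)

theorem exists_maximal_segment [Finite V] (hpos : ∀ u v, 0 < w u v) (t : ℝ≥0∞) {u y : V}
    (hfin : gdist w u y ≠ ⊤) :
    ∃ v, gdist w u v ≤ t ∧ gdist w u v + gdist w v y ≤ gdist w u y ∧
      (v = y ∨ ∃ u', gdist w u v + (w v u' + gdist w u' y) ≤ gdist w u y ∧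
        t + gdist w u' y ≤ gdist w u y) := by
  obtain ⟨v, ⟨hvt, hvy⟩, hmin⟩ := Set.exists_min_image
    {v | gdist w u v ≤ t ∧ gdist w u v + gdist w v y ≤ gdist w u y} (fun v => gdist w v y)
    (Set.toFinite _) ⟨u, by simp [gdist_self]⟩
  refine ⟨v, hvt, hvy, or_iff_not_imp_left.mpr fun hne => ?_⟩
  obtain ⟨u', hu'⟩ := exists_first_edge (w := w) hne
  have hpath : gdist w u v + (w v u' + gdist w u' y) ≤ gdist w u y :=
    le_trans (by gcongr) hvy
  have hgeod : gdist w u u' + gdist w u' y ≤ gdist w u y :=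
    calc gdist w u u' + gdist w u' y
        ≤ gdist w u v + w v u' + gdist w u' y := by
          gcongr
          exact (gdist_triangle w u v u').trans (by gcongr; exact gdist_le w v u')
      _ ≤ gdist w u y := by rwa [add_assoc]
  have hlong : t < gdist w u u' := by
    by_contra! hle
    have hfin' : gdist w v y ≠ ⊤ := ne_top_of_le_ne_top hfin (le_add_self.trans hvy)
    exact (hmin u' ⟨hle, hgeod⟩).not_gt
      (lt_of_add_add_le (hpos v u').ne' hfin' (by rwa [zero_add]))
  exact ⟨u', hpath, le_trans (by gcongr) hgeod⟩

end HopDistance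

section Shortcuts

variable {V : Type*} {w : V → V → ℝ≥0∞} {H : Set (V × V)}

theorem addShortcuts_comm (hw : ∀ u v, w u v = w v u) (u v : V) :
    addShortcuts w H u v = addShortcuts w H v u := by
  simp only [addShortcuts, hw u v, gdist_comm hw u v, or_comm]

theorem gdist_le_addShortcuts (u v : V) : gdist w u v ≤ addShortcuts w H u v :=
  le_inf (gdist_le w u v) (by split_ifs <;> simp)

theorem gdist_le_hopDist_addShortcuts (b : ℕ) (u v : V) :
    gdist w u v ≤ hopDist (addShortcuts w H) b u v := by
  induction b generalizing u with
  | zero =>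
    rcases eq_or_ne u v with rfl | huv
    · simp [gdist_self]
    · simp [hopDist, huv]
  | succ b ih =>
    exact le_inf (ih u) (le_iInf fun x => (gdist_triangle w u x v).trans
      (add_le_add (gdist_le_addShortcuts u x) (ih x)))

theorem hopDist_addShortcuts_one_le (u v : V) : hopDist (addShortcuts w H) 1 u v ≤ w u v :=
  (hopDist_one_le _ u v).trans inf_le_left

theorem hopDist_addShortcuts_le_gdist {u v : V} (h : (u, v) ∈ H) :
    hopDist (addShortcuts w H) 1 u v ≤ gdist w u v :=
  (hopDist_one_le _ u v).trans (inf_le_right.trans_eq (if_pos (Or.inl h)))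

end Shortcuts

section Stretch

variable {V : Type*} {w : V → V → ℝ≥0∞} {H : Set (V × V)} {h r : ℕ} {α t : ℝ≥0∞} {A B : Set V}

/-- The invariant of the stretch analysis: in `G ∪ H`, for all `x, y ∈ A`, at most `h` hops and
length at most `α · dist(x, y)` suffice to go from `x` to `y`, or else to escape from `x` to
some vertex of `B`. -/
def JoinsOrEscapes (w : V → V → ℝ≥0∞) (H : Set (V × V)) (h : ℕ) (α : ℝ≥0∞) (A B : Set V) : Prop :=
  ∀ x ∈ A, ∀ y ∈ A, hopDist (addShortcuts w H) h x y ≤ α * gdist w x y ∨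
    ∃ z ∈ B, hopDist (addShortcuts w H) h x z ≤ α * gdist w x y

/-- The state of a scan of a shortest `x`–`y` path that has arrived at `v` after `j` segments, each
of `h` hops followed by an edge and longer than `t`, with stretch `α` so far. Both bounds are stated
through the distance still to go, so that extending the scan requires no subtraction in `ℝ≥0∞`. -/
structure IsGoodPrefix (w : V → V → ℝ≥0∞) (H : Set (V × V)) (h : ℕ) (α t : ℝ≥0∞) (j : ℕ)
    (x v y : V) : Prop where
  length_le : j * t + gdist w v y ≤ gdist w x y
  hopDist_le : hopDist (addShortcuts w H) (j * (h + 1)) x v + α * gdist w v y ≤ α * gdist w x y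

theorem IsGoodPrefix.refl (w : V → V → ℝ≥0∞) (H : Set (V × V)) (h : ℕ) (α t : ℝ≥0∞) (x y : V) :
    IsGoodPrefix w H h α t 0 x x y :=
  ⟨by simp, by simp [hopDist_self]⟩

theorem IsGoodPrefix.extend {j : ℕ} {x v y v' u : V} (hpre : IsGoodPrefix w H h α t j x v y)
    (hα : 1 ≤ α) (hgood : hopDist (addShortcuts w H) h v v' ≤ α * gdist w v v')
    (hpath : gdist w v v' + (w v' u + gdist w u y) ≤ gdist w v y)
    (hlong : t + gdist w u y ≤ gdist w v y) :
    IsGoodPrefix w H h α t (j + 1) x u y where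
  length_le :=
    calc ((j + 1 : ℕ) : ℝ≥0∞) * t + gdist w u y = j * t + (t + gdist w u y) := by push_cast; ring
      _ ≤ j * t + gdist w v y := by gcongr
      _ ≤ gdist w x y := hpre.length_le
  hopDist_le := by
    have hedge : hopDist (addShortcuts w H) 1 v' u ≤ α * w v' u :=
      (hopDist_addShortcuts_one_le v' u).trans (le_mul_of_one_le_left' hα)
    calc hopDist (addShortcuts w H) ((j + 1) * (h + 1)) x u + α * gdist w u y
        ≤ hopDist (addShortcuts w H) (j * (h + 1)) x v +
            (α * gdist w v v' + α * w v' u) + α * gdist w u y := by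
          gcongr
          exact hopDist_le_add (by rw [add_one_mul]) le_rfl (hopDist_le_add le_rfl hgood hedge)
      _ = hopDist (addShortcuts w H) (j * (h + 1)) x v +
            α * (gdist w v v' + (w v' u + gdist w u y)) := by ring
      _ ≤ hopDist (addShortcuts w H) (j * (h + 1)) x v + α * gdist w v y := by gcongr
      _ ≤ α * gdist w x y := hpre.hopDist_le

theorem IsGoodPrefix.add_length_le (hw : ∀ u v, w u v = w v u) {i j : ℕ} {x u v y : V}
    (hpre : IsGoodPrefix w H h α t i x u y) (hsuf : IsGoodPrefix w H h α t j y v u) :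
    ((i + j : ℕ) : ℝ≥0∞) * t + gdist w u v ≤ gdist w x y :=
  calc ((i + j : ℕ) : ℝ≥0∞) * t + gdist w u v = i * t + (j * t + gdist w v u) := by
        rw [gdist_comm hw u v]
        push_cast
        ring
    _ ≤ i * t + gdist w u y := by
        gcongr
        exact hsuf.length_le.trans_eq (gdist_comm hw y u)
    _ ≤ gdist w x y := hpre.length_le

theorem IsGoodPrefix.add_hopDist_le (hw : ∀ u v, w u v = w v u) {i j : ℕ} {x u v y : V}
    (hpre : IsGoodPrefix w H h α t i x u y) (hsuf : IsGoodPrefix w H h α t j y v u) :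
    hopDist (addShortcuts w H) (i * (h + 1)) x u + α * gdist w u v +
      hopDist (addShortcuts w H) (j * (h + 1)) v y ≤ α * gdist w x y := by
  refine le_trans ?_ hpre.hopDist_le
  rw [add_assoc, add_comm (α * _), hopDist_comm (addShortcuts_comm hw) _ v y, gdist_comm hw u v,
    gdist_comm hw u y]
  gcongr
  exact hsuf.hopDist_le

theorem exists_goodPrefix_join_or_escape [Finite V] (hpos : ∀ u v, 0 < w u v) (hα : 1 ≤ α)
    (hA : JoinsOrEscapes w H h α Set.univ A) (t : ℝ≥0∞) {x y : V} (hfin : gdist w x y ≠ ⊤) :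
    ∃ j v, IsGoodPrefix w H h α t j x v y ∧
      (hopDist (addShortcuts w H) h v y ≤ α * gdist w v y ∨
        v ≠ y ∧ ∃ z ∈ A, hopDist (addShortcuts w H) h v z ≤ α * t) := by
  obtain ⟨v, ⟨j, hpre⟩, hmin⟩ := Set.exists_min_image {v | ∃ j, IsGoodPrefix w H h α t j x v y}
    (fun v => gdist w v y) (Set.toFinite _) ⟨x, 0, .refl w H h α t x y⟩
  refine ⟨j, v, hpre, or_iff_not_imp_left.mpr fun hbad => ?_⟩
  have hvy : v ≠ y := by
    rintro rfl
    exact hbad (by simp [hopDist_self])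
  have hfin' : gdist w v y ≠ ⊤ := ne_top_of_le_ne_top hfin (le_add_self.trans hpre.length_le)
  obtain ⟨v', hv't, -, hnext⟩ := exists_maximal_segment hpos t hfin'
  refine ⟨hvy, ?_⟩
  rcases hA v trivial v' trivial with hgood | ⟨z, hz, hesc⟩
  · rcases hnext with rfl | ⟨u, hpath, hlong⟩
    · exact absurd hgood hbad
    · exact absurd (hmin u ⟨j + 1, hpre.extend hα hgood hpath hlong⟩)
        (lt_of_add_add_le (hpos v' u).ne' hfin' hpath).not_ge
  · exact ⟨z, hz, hesc.trans (by gcongr)⟩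

theorem hopDist_le_or_exists_escaping_ends [Finite V] (hw : ∀ u v, w u v = w v u)
    (hpos : ∀ u v, 0 < w u v) (hα : 1 ≤ α) (hA : JoinsOrEscapes w H h α Set.univ A)
    (ht : t ≠ ⊤) {x y : V} (hxy : gdist w x y ≤ r * t) :
    hopDist (addShortcuts w H) (r * (h + 1) + h) x y ≤ α * gdist w x y ∨
      ∃ i j u v, i + j < r ∧
        hopDist (addShortcuts w H) (i * (h + 1)) x u + α * gdist w u v +
          hopDist (addShortcuts w H) (j * (h + 1)) v y ≤ α * gdist w x y ∧
        (∃ z ∈ A, hopDist (addShortcuts w H) h u z ≤ α * t) ∧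
        ∃ z ∈ A, hopDist (addShortcuts w H) h v z ≤ α * t := by
  have hrt : (r : ℝ≥0∞) * t ≠ ⊤ := ENNReal.mul_ne_top (ENNReal.natCast_ne_top r) ht
  rcases eq_or_ne x y with rfl | hne
  · exact .inl (by simp [hopDist_self])
  have ht0 : t ≠ 0 := by
    rintro rfl
    exact (gdist_pos hpos hne).not_ge (by simpa using hxy)
  have le_r_of_mul_le {m : ℕ} (hm : (m : ℝ≥0∞) * t ≤ r * t) : m ≤ r :=
    Nat.cast_le.mp ((ENNReal.mul_le_mul_iff_left ht0 ht).mp hm)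
  obtain ⟨i, u, hpre, hjoin | ⟨-, hescu⟩⟩ :=
    exists_goodPrefix_join_or_escape hpos hα hA t (ne_top_of_le_ne_top hrt hxy)
  · have hi : i ≤ r := le_r_of_mul_le (le_self_add.trans (hpre.length_le.trans hxy))
    exact .inl <| (hopDist_le_add (by gcongr) le_rfl hjoin).trans hpre.hopDist_le
  have hfin : gdist w y u ≠ ⊤ := by
    rw [gdist_comm hw]
    exact ne_top_of_le_ne_top hrt (le_add_self.trans (hpre.length_le.trans hxy))
  obtain ⟨j, v, hsuf, hv⟩ := exists_goodPrefix_join_or_escape hpos hα hA t hfin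
  have hlen : ((i + j : ℕ) : ℝ≥0∞) * t + gdist w u v ≤ r * t :=
    (hpre.add_length_le hw hsuf).trans hxy
  have hends := hpre.add_hopDist_le hw hsuf
  have hij : i + j ≤ r := le_r_of_mul_le (le_self_add.trans hlen)
  rcases hv with hjoin | ⟨hvu, hescv⟩
  · rw [hopDist_comm (addShortcuts_comm hw), gdist_comm hw] at hjoin
    have hops : i * (h + 1) + h + j * (h + 1) ≤ r * (h + 1) + h := by nlinarith
    exact .inl <| (hopDist_le_add hops (hopDist_le_add le_rfl le_rfl hjoin) le_rfl).trans hends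
  · refine .inr ⟨i, j, u, v, hij.lt_of_ne fun heq => ?_, hends, hescu, hescv⟩
    rw [heq] at hlen
    exact hlen.not_gt (ENNReal.lt_add_right hrt (gdist_pos hpos hvu.symm).ne')

theorem gdist_le_of_hopDist_le (hw : ∀ u v, w u v = w v u) {c : ℝ≥0∞} {u v z z' : V}
    (hz : hopDist (addShortcuts w H) h u z ≤ c) (hz' : hopDist (addShortcuts w H) h v z' ≤ c) :
    gdist w z z' ≤ c + gdist w u v + c :=
  calc gdist w z z' ≤ gdist w z u + gdist w u v + gdist w v z' :=
        (gdist_triangle w z v z').trans (by gcongr; exact gdist_triangle w z u v)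
    _ ≤ c + gdist w u v + c := by
        rw [gdist_comm hw z u]
        gcongr
        · exact (gdist_le_hopDist_addShortcuts h u z).trans hz
        · exact (gdist_le_hopDist_addShortcuts h v z').trans hz'

theorem hopDist_le_add_or_escape [Finite V] (hw : ∀ u v, w u v = w v u)
    (hpos : ∀ u v, 0 < w u v) (hα : 1 ≤ α) (hA : JoinsOrEscapes w H h α Set.univ A)
    (hAB : JoinsOrEscapes w H 1 1 A B) (ht : t ≠ ⊤) {x y : V} (hxy : gdist w x y ≤ r * t) :
    hopDist (addShortcuts w H) (r * (h + 1) + h) x y ≤ α * gdist w x y + 4 * (α * t) ∨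
      ∃ z ∈ B,
        hopDist (addShortcuts w H) (r * (h + 1) + h) x z ≤ α * gdist w x y + 4 * (α * t) := by
  rcases hopDist_le_or_exists_escaping_ends hw hpos hα hA ht hxy with
    hjoin | ⟨i, j, u, v, hij, hends, ⟨z, hz, hzu⟩, z', hz', hzv⟩
  · exact .inl (hjoin.trans le_self_add)
  set P := hopDist (addShortcuts w H) (i * (h + 1)) x u
  set Q := hopDist (addShortcuts w H) (j * (h + 1)) v y
  have hops : i * (h + 1) + h + 1 + (h + j * (h + 1)) ≤ r * (h + 1) + h := by nlinarith
  have hzz' : gdist w z z' ≤ α * t + α * gdist w u v + α * t :=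
    (gdist_le_of_hopDist_le hw hzu hzv).trans (by gcongr; exact le_mul_of_one_le_left' hα)
  have hxz : hopDist (addShortcuts w H) (i * (h + 1) + h) x z ≤ P + α * t :=
    hopDist_le_add le_rfl le_rfl hzu
  rcases hAB z hz z' hz' with hjoin | ⟨b, hb, hesc⟩
  · left
    have hz'y : hopDist (addShortcuts w H) (h + j * (h + 1)) z' y ≤ α * t + Q :=
      hopDist_le_add le_rfl (by rwa [hopDist_comm (addShortcuts_comm hw)]) le_rfl
    rw [one_mul] at hjoin
    calc hopDist (addShortcuts w H) (r * (h + 1) + h) x y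
        ≤ P + α * t + (α * t + α * gdist w u v + α * t) + (α * t + Q) :=
          hopDist_le_add hops (hopDist_le_add le_rfl hxz (hjoin.trans hzz')) hz'y
      _ = P + α * gdist w u v + Q + 4 * (α * t) := by ring
      _ ≤ α * gdist w x y + 4 * (α * t) := by gcongr
  · refine .inr ⟨b, hb, ?_⟩
    rw [one_mul] at hesc
    calc hopDist (addShortcuts w H) (r * (h + 1) + h) x b
        ≤ P + α * t + (α * t + α * gdist w u v + α * t) :=
          hopDist_le_add (by omega) hxz (hesc.trans hzz')
      _ = P + α * gdist w u v + 3 * (α * t) := by ring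
      _ ≤ α * gdist w x y + 4 * (α * t) := by
        gcongr
        · exact le_self_add.trans hends
        · norm_num

theorem JoinsOrEscapes.step [Finite V] (hw : ∀ u v, w u v = w v u) (hpos : ∀ u v, 0 < w u v)
    (hr : r ≠ 0) (hα : 1 ≤ α) (hA : JoinsOrEscapes w H h α Set.univ A)
    (hAB : JoinsOrEscapes w H 1 1 A B) :
    JoinsOrEscapes w H (r * (h + 1) + h) (α * (1 + 4 / r)) Set.univ B := by
  intro x _ y _
  have hr0 : (r : ℝ≥0∞) ≠ 0 := Nat.cast_ne_zero.mpr hr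
  by_cases hfin : gdist w x y = ⊤
  · have hα0 : α * (1 + 4 / (r : ℝ≥0∞)) ≠ 0 :=
      mul_ne_zero (zero_lt_one.trans_le hα).ne' (by simp)
    simp [hfin, ENNReal.mul_top hα0]
  have hsplit : α * (1 + 4 / (r : ℝ≥0∞)) * gdist w x y =
      α * gdist w x y + 4 * (α * (gdist w x y / r)) := by
    simp only [div_eq_mul_inv]
    ring
  rw [hsplit]
  exact hopDist_le_add_or_escape hw hpos hα hA hAB (ENNReal.div_ne_top hfin hr0)
    (ENNReal.mul_div_cancel hr0 (ENNReal.natCast_ne_top r)).ge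

end Stretch

section Sampling

variable {V R : Type*} [LinearOrder R]

/-- The bunch determined by `f` (in use, the distances from a fixed vertex) and a sample `B`: the
vertices of `A` at which `f` lies strictly below all its values on `B`. -/
noncomputable def bunch (f : V → R) (A B : Finset V) : Finset V :=
  {b ∈ A | ∀ t ∈ B, f b < f t}

/-- `F` serves one level of the hierarchy with distances `d`, passing from `A` to the sample `B`:
for `a, b ∈ A`, it contains the pair `(a, b)` or a pair leading from `a` to a vertex of `B` that is
at least as close as `b`. -/
def IsLevelEdgeSet (d : V → V → R) (A B : Finset V) (F : Finset (V × V)) : Prop :=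
  ∀ a ∈ A, ∀ b ∈ A, (a, b) ∈ F ∨ ∃ z ∈ B, (a, z) ∈ F ∧ d a z ≤ d a b

theorem mem_bunch {f : V → R} {A B : Finset V} {b : V} :
    b ∈ bunch f A B ↔ b ∈ A ∧ ∀ t ∈ B, f b < f t :=
  Finset.mem_filter

theorem notMem_of_mem_bunch {f : V → R} {A B : Finset V} {b : V} (hb : b ∈ bunch f A B) : b ∉ B :=
  fun hbB => lt_irrefl _ ((mem_bunch.mp hb).2 b hbB)

theorem bunch_self (f : V → R) (A : Finset V) : bunch f A A = ∅ :=
  Finset.eq_empty_of_forall_notMem fun _ hb => notMem_of_mem_bunch hb (mem_bunch.mp hb).1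

theorem sum_card_bunch_le_choose (f : V → R) (A : Finset V) (s : ℕ) :
    ∑ B ∈ A.powersetCard s, (bunch f A B).card ≤ A.card.choose (s + 1) := by
  -- A pair `(B, u)` with `u` in the bunch of `B` is recovered from `insert u B`, in which `u` is
  -- the unique minimizer of `f`.
  rw [← Finset.card_sigma, ← Finset.card_powersetCard]
  refine Finset.card_le_card_of_injOn (fun q => insert q.2 q.1) ?_ ?_
  · rintro ⟨B, u⟩ hq
    obtain ⟨hB, hu⟩ := Finset.mem_sigma.mp hq
    obtain ⟨hBA, hBs⟩ := Finset.mem_powersetCard.mp hB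
    exact Finset.mem_powersetCard.mpr ⟨Finset.insert_subset (mem_bunch.mp hu).1 hBA,
      by rw [Finset.card_insert_of_notMem (notMem_of_mem_bunch hu), hBs]⟩
  · rintro ⟨B, u⟩ hq ⟨B', u'⟩ hq' (heq : insert u B = insert u' B')
    have hu : u ∈ bunch f A B := (Finset.mem_sigma.mp hq).2
    have hu' : u' ∈ bunch f A B' := (Finset.mem_sigma.mp hq').2
    obtain rfl : u = u' := by
      by_contra hne
      have huB' : u ∈ B' :=
        Finset.mem_of_mem_insert_of_ne (heq ▸ Finset.mem_insert_self u B) hne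
      have hu'B : u' ∈ B :=
        Finset.mem_of_mem_insert_of_ne (heq ▸ Finset.mem_insert_self u' B') (Ne.symm hne)
      exact lt_asymm ((mem_bunch.mp hu).2 u' hu'B) ((mem_bunch.mp hu').2 u huB')
    obtain rfl : B = B' := by
      rw [← Finset.erase_insert (notMem_of_mem_bunch hu), heq,
        Finset.erase_insert (notMem_of_mem_bunch hu')]
    rfl

theorem exists_sample (d : V → V → R) (A : Finset V) (s : ℕ) :
    ∃ B : Finset V, B.card ≤ s ∧ (s + 1) * ∑ a ∈ A, (bunch (d a) A B).card ≤ A.card ^ 2 := by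
  by_cases hs : A.card ≤ s
  · exact ⟨A, hs, by simp [bunch_self]⟩
  have hchoose := Nat.choose_succ_right_eq A.card s
  have htotal : ∑ B ∈ A.powersetCard s, (s + 1) * ∑ a ∈ A, (bunch (d a) A B).card ≤
      ∑ _B ∈ A.powersetCard s, A.card ^ 2 :=
    calc ∑ B ∈ A.powersetCard s, (s + 1) * ∑ a ∈ A, (bunch (d a) A B).card
        = (s + 1) * ∑ a ∈ A, ∑ B ∈ A.powersetCard s, (bunch (d a) A B).card := by
          rw [← Finset.mul_sum, Finset.sum_comm]
      _ ≤ (s + 1) * ∑ _a ∈ A, A.card.choose (s + 1) := by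
          gcongr with a
          exact sum_card_bunch_le_choose (d a) A s
      _ = A.card * (A.card.choose (s + 1) * (s + 1)) := by
          rw [Finset.sum_const, smul_eq_mul]
          ring
      _ ≤ A.card * (A.card.choose s * A.card) := by
          rw [hchoose]
          gcongr
          exact Nat.sub_le _ _
      _ = ∑ _B ∈ A.powersetCard s, A.card ^ 2 := by
          rw [Finset.sum_const, Finset.card_powersetCard, smul_eq_mul]
          ring
  obtain ⟨B, hB, hle⟩ :=
    Finset.exists_le_of_sum_le (Finset.powersetCard_nonempty.mpr (not_le.mp hs).le) htotal
  exact ⟨B, (Finset.mem_powersetCard.mp hB).2.le, hle⟩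

theorem exists_bunch_with_pivot (f : V → R) (A B : Finset V) :
    ∃ N : Finset V, N.card ≤ (bunch f A B).card + 1 ∧
      ∀ b ∈ A, b ∈ N ∨ ∃ z ∈ B, z ∈ N ∧ f z ≤ f b := by
  rcases B.eq_empty_or_nonempty with rfl | hB
  · exact ⟨bunch f A ∅, Nat.le_succ _, fun b hb => .inl (mem_bunch.mpr ⟨hb, by simp⟩)⟩
  obtain ⟨p, hp, hmin⟩ := B.exists_min_image f hB
  refine ⟨insert p (bunch f A B), Finset.card_insert_le _ _, fun b hb => ?_⟩
  by_cases hlt : ∀ t ∈ B, f b < f t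
  · exact .inl (Finset.mem_insert_of_mem (mem_bunch.mpr ⟨hb, hlt⟩))
  · push Not at hlt
    obtain ⟨t, ht, htb⟩ := hlt
    exact .inr ⟨p, hp, Finset.mem_insert_self _ _, (hmin t ht).trans htb⟩

theorem IsLevelEdgeSet.mono {d : V → V → R} {A B : Finset V} {F F' : Finset (V × V)}
    (hF : IsLevelEdgeSet d A B F) (hsub : F ⊆ F') : IsLevelEdgeSet d A B F' :=
  fun a ha b hb => (hF a ha b hb).imp (fun h => hsub h)
    fun ⟨z, hz, haz, hle⟩ => ⟨z, hz, hsub haz, hle⟩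

theorem exists_isLevelEdgeSet (d : V → V → R) (A B : Finset V) :
    ∃ F : Finset (V × V), F.card ≤ ∑ a ∈ A, (bunch (d a) A B).card + A.card ∧
      IsLevelEdgeSet d A B F := by
  choose N hNcard hN using fun a => exists_bunch_with_pivot (d a) A B
  have mem_edges {a z : V} (ha : a ∈ A) (hz : z ∈ N a) :
      (a, z) ∈ A.biUnion fun a => (N a).image (Prod.mk a) :=
    Finset.mem_biUnion.mpr ⟨a, ha, Finset.mem_image_of_mem _ hz⟩
  refine ⟨A.biUnion fun a => (N a).image (Prod.mk a), ?_, fun a ha b hb => ?_⟩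
  · calc (A.biUnion fun a => (N a).image (Prod.mk a)).card
        ≤ ∑ a ∈ A, ((N a).image (Prod.mk a)).card := Finset.card_biUnion_le
      _ ≤ ∑ a ∈ A, ((bunch (d a) A B).card + 1) :=
        Finset.sum_le_sum fun a _ => Finset.card_image_le.trans (hNcard a)
      _ = ∑ a ∈ A, (bunch (d a) A B).card + A.card := by simp [Finset.sum_add_distrib]
  · exact (hN a b hb).imp (mem_edges ha) fun ⟨z, hz, hzN, hle⟩ => ⟨z, hz, mem_edges ha hzN, hle⟩

theorem exists_level (d : V → V → R) (A : Finset V) {m : ℝ} (hm : 0 < m) :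
    ∃ (B : Finset V) (F : Finset (V × V)), (B.card : ℝ) ≤ m ∧
      (F.card : ℝ) ≤ (A.card : ℝ) ^ 2 / m + A.card ∧ IsLevelEdgeSet d A B F := by
  obtain ⟨B, hB, hbunch⟩ := exists_sample d A ⌊m⌋₊
  obtain ⟨F, hFcard, hF⟩ := exists_isLevelEdgeSet d A B
  refine ⟨B, F, (Nat.cast_le.mpr hB).trans (Nat.floor_le hm.le), ?_, hF⟩
  set S := ∑ a ∈ A, (bunch (d a) A B).card
  have hS : (S : ℝ) ≤ (A.card : ℝ) ^ 2 / m := by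
    rw [le_div_iff₀' hm]
    calc m * S ≤ (⌊m⌋₊ + 1) * S := by gcongr; exact (Nat.lt_floor_add_one m).le
      _ ≤ (A.card : ℝ) ^ 2 := by exact_mod_cast hbunch
  calc (F.card : ℝ) ≤ S + A.card := by exact_mod_cast hFcard
    _ ≤ (A.card : ℝ) ^ 2 / m + A.card := by gcongr

theorem exists_hierarchy [Fintype V] (d : V → V → R) {m : ℕ → ℝ} (hm : ∀ i, 0 < m i)
    (hm0 : (Fintype.card V : ℝ) ≤ m 0) :
    ∃ (A : ℕ → Finset V) (F : ℕ → Finset (V × V)), A 0 = Finset.univ ∧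
      ∀ i, ((A i).card : ℝ) ≤ m i ∧ ((F i).card : ℝ) ≤ m i ^ 2 / m (i + 1) + m i ∧
        IsLevelEdgeSet d (A i) (A (i + 1)) (F i) := by
  choose B F hB hFcard hF using fun (i : ℕ) (A : Finset V) => exists_level d A (hm (i + 1))
  let A : ℕ → Finset V := fun i => Nat.rec Finset.univ B i
  have hA : ∀ i, ((A i).card : ℝ) ≤ m i
    | 0 => hm0
    | i + 1 => hB i (A i)
  refine ⟨A, fun i => F i (A i), rfl, fun i => ⟨hA i, (hFcard i (A i)).trans ?_, hF i (A i)⟩⟩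
  have := hA i
  have := (hm (i + 1)).le
  gcongr

end Sampling

section Sizes

/-- The target size of the `i`-th vertex set of the hierarchy on `n` vertices, where
`N = 2 ^ (k + 1) - 1`. The exponent makes `mᵢ² / mᵢ₊₁` proportional to `n ^ (1 + 1 / N)`; the factor
`2⁻ⁱ` makes these ratios summable and brings the last size below `1`. -/
noncomputable def levelSize (n N : ℝ) (i : ℕ) : ℝ :=
  n ^ (1 - ((2 : ℝ) ^ i - 1) / N) * (1 / 2) ^ i

variable {n N : ℝ}

theorem levelSize_zero (n N : ℝ) : levelSize n N 0 = n := by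
  simp [levelSize]

theorem levelSize_pos (hn : 0 < n) (N : ℝ) (i : ℕ) : 0 < levelSize n N i := by
  unfold levelSize
  positivity

theorem levelSize_lt_one (n : ℝ) (k : ℕ) : levelSize n (2 ^ (k + 1) - 1) (k + 1) < 1 := by
  have hN : (0 : ℝ) < 2 ^ (k + 1) - 1 := sub_pos.mpr (one_lt_pow₀ one_lt_two k.succ_ne_zero)
  rw [levelSize, div_self hN.ne', sub_self, Real.rpow_zero, one_mul]
  exact pow_lt_one₀ (by norm_num) (by norm_num) k.succ_ne_zero

theorem levelSize_sq_div_succ (hn : 0 < n) (hN : N ≠ 0) (i : ℕ) :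
    levelSize n N i ^ 2 / levelSize n N (i + 1) = 2 * (n ^ (1 + 1 / N) * (1 / 2) ^ i) := by
  have hpow : (n ^ (1 - ((2 : ℝ) ^ i - 1) / N)) ^ 2 =
      n ^ (1 + 1 / N) * n ^ (1 - ((2 : ℝ) ^ (i + 1) - 1) / N) := by
    rw [← Real.rpow_add hn, ← Real.rpow_mul_natCast hn.le]
    congr 1
    field_simp
    push_cast
    ring
  rw [div_eq_iff (levelSize_pos hn N (i + 1)).ne', levelSize, levelSize, mul_pow, hpow]
  ring

theorem levelSize_le (hn : 1 ≤ n) (hN : 0 < N) (i : ℕ) :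
    levelSize n N i ≤ n ^ (1 + 1 / N) * (1 / 2) ^ i := by
  have hexp : 1 - ((2 : ℝ) ^ i - 1) / N ≤ 1 + 1 / N := by
    have h2i : (1 : ℝ) ≤ 2 ^ i := one_le_pow₀ one_le_two
    rw [sub_le_iff_le_add, add_assoc, ← add_div]
    exact le_add_of_nonneg_right (by positivity)
  unfold levelSize
  gcongr

theorem exists_small_hierarchy {V R : Type*} [LinearOrder R] [Fintype V] [Nonempty V]
    (d : V → V → R) (k : ℕ) :
    ∃ (A : ℕ → Finset V) (H : Finset (V × V)), A 0 = Finset.univ ∧ A (k + 1) = ∅ ∧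
      (H.card : ℝ) ≤ 6 * (Fintype.card V : ℝ) ^ ((1 : ℝ) + 1 / ((2 : ℝ) ^ (k + 1) - 1)) ∧
      ∀ i ≤ k, IsLevelEdgeSet d (A i) (A (i + 1)) H := by
  set n : ℝ := (Fintype.card V : ℝ)
  set N : ℝ := (2 : ℝ) ^ (k + 1) - 1
  have hn : 1 ≤ n := Nat.one_le_cast.mpr Fintype.card_pos
  have hn0 : 0 < n := zero_lt_one.trans_le hn
  have hN : 0 < N := sub_pos.mpr (one_lt_pow₀ one_lt_two k.succ_ne_zero)
  obtain ⟨A, F, hA0, hlevel⟩ :=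
    exists_hierarchy d (levelSize_pos hn0 N) (levelSize_zero n N).ge
  choose hA hFcard hF using hlevel
  refine ⟨A, (Finset.range (k + 1)).biUnion F, hA0, ?_, ?_, fun i hi => (hF i).mono ?_⟩
  · have hlt : ((A (k + 1)).card : ℝ) < 1 :=
      (hA (k + 1)).trans_lt (levelSize_lt_one n k)
    exact Finset.card_eq_zero.mp (Nat.cast_lt_one.mp hlt)
  · have hFi (i : ℕ) : ((F i).card : ℝ) ≤ 3 * n ^ (1 + 1 / N) * (1 / 2) ^ i := by
      linarith [hFcard i, levelSize_sq_div_succ hn0 hN.ne' i, levelSize_le hn hN i]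
    calc (((Finset.range (k + 1)).biUnion F).card : ℝ)
        ≤ ∑ i ∈ Finset.range (k + 1), ((F i).card : ℝ) := by
          exact_mod_cast Finset.card_biUnion_le
      _ ≤ ∑ i ∈ Finset.range (k + 1), 3 * n ^ (1 + 1 / N) * (1 / 2) ^ i :=
        Finset.sum_le_sum fun i _ => hFi i
      _ = 3 * n ^ (1 + 1 / N) * ∑ i ∈ Finset.range (k + 1), (1 / 2) ^ i := by
        rw [Finset.mul_sum]
      _ ≤ 3 * n ^ (1 + 1 / N) * 2 := by
        gcongr
        exact sum_geometric_two_le (k + 1)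
      _ = 6 * n ^ (1 + 1 / N) := by ring
  · exact Finset.subset_biUnion_of_mem F (Finset.mem_range_succ_iff.mpr hi)

end Sizes

section Assembly

variable {V : Type*} {w : V → V → ℝ≥0∞} {H : Finset (V × V)}

theorem IsLevelEdgeSet.joinsOrEscapes {A B : Finset V} (hH : IsLevelEdgeSet (gdist w) A B H) :
    JoinsOrEscapes w H 1 1 A B := by
  intro a ha b hb
  rw [one_mul]
  exact (hH a ha b hb).imp (fun hab => hopDist_addShortcuts_le_gdist hab)
    fun ⟨z, hz, haz, hle⟩ => ⟨z, hz, (hopDist_addShortcuts_le_gdist haz).trans hle⟩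

theorem joinsOrEscapes_of_hierarchy [Fintype V] (hw : ∀ u v, w u v = w v u)
    (hpos : ∀ u v, 0 < w u v) {r : ℕ} (hr : r ≠ 0) {A : ℕ → Finset V} (hA0 : A 0 = Finset.univ)
    {k : ℕ} (hH : ∀ i ≤ k, IsLevelEdgeSet (gdist w) (A i) (A (i + 1)) H) :
    JoinsOrEscapes w H (2 * (r + 1) ^ k - 1) ((1 + 4 / r) ^ k) Set.univ (A (k + 1)) := by
  induction k with
  | zero => simpa [hA0] using (hH 0 le_rfl).joinsOrEscapes
  | succ k ih =>
    have hops : r * (2 * (r + 1) ^ k - 1 + 1) + (2 * (r + 1) ^ k - 1) =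
        2 * (r + 1) ^ (k + 1) - 1 := by
      have hlen : 0 < 2 * (r + 1) ^ k := by positivity
      rw [Nat.sub_add_cancel hlen, ← Nat.add_sub_assoc hlen]
      congr 1
      ring
    rw [pow_succ (1 + 4 / (r : ℝ≥0∞)), ← hops]
    exact (ih fun i hi => hH i (hi.trans k.le_succ)).step hw hpos hr
      (one_le_pow₀ le_self_add) (hH (k + 1) le_rfl).joinsOrEscapes

theorem isHopset_of_hierarchy [Fintype V] (hw : ∀ u v, w u v = w v u) (hpos : ∀ u v, 0 < w u v)
    {r : ℕ} (hr : r ≠ 0) {A : ℕ → Finset V} (hA0 : A 0 = Finset.univ) {k : ℕ}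
    (hAk : A (k + 1) = ∅) (hH : ∀ i ≤ k, IsLevelEdgeSet (gdist w) (A i) (A (i + 1)) H)
    {ε : ℝ} (hε : (1 + 4 / (r : ℝ≥0∞)) ^ k ≤ ENNReal.ofReal (1 + ε)) :
    IsHopset w H (2 * (r + 1) ^ k) ε := by
  refine fun u v => ⟨gdist_le_hopDist_addShortcuts _ u v, ?_⟩
  rcases joinsOrEscapes_of_hierarchy hw hpos hr hA0 hH u trivial v trivial with hjoin | ⟨z, hz, -⟩
  · calc hopDist (addShortcuts w H) (2 * (r + 1) ^ k) u v
        ≤ hopDist (addShortcuts w H) (2 * (r + 1) ^ k - 1) u v :=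
          hopDist_antitone _ u v (Nat.sub_le _ 1)
      _ ≤ (1 + 4 / r) ^ k * gdist w u v := hjoin
      _ ≤ ENNReal.ofReal (1 + ε) * gdist w u v := by gcongr
  · simp [hAk] at hz

theorem one_add_pow_le_of_mul_le_log {a x : ℝ} (ha : 0 ≤ a) (hx : 0 < x) {k : ℕ}
    (h : k * a ≤ Real.log x) : (1 + a) ^ k ≤ x :=
  calc (1 + a) ^ k ≤ Real.exp a ^ k := by
        gcongr
        linarith [Real.add_one_le_exp a]
    _ = Real.exp (k * a) := (Real.exp_nat_mul a k).symm
    _ ≤ x := (Real.le_log_iff_exp_le hx).mp h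

theorem one_add_four_div_pow_le_ofReal {k r : ℕ} {x : ℝ} (hx : 1 < x) (hr : r ≠ 0)
    (hkr : 4 * (k : ℝ) / Real.log x ≤ r) :
    (1 + 4 / (r : ℝ≥0∞)) ^ k ≤ ENNReal.ofReal x := by
  have hr0 : (0 : ℝ) < r := Nat.cast_pos.mpr (Nat.pos_of_ne_zero hr)
  have hcast : 1 + 4 / (r : ℝ≥0∞) = ENNReal.ofReal (1 + 4 / r) := by
    rw [ENNReal.ofReal_add zero_le_one (by positivity), ENNReal.ofReal_div_of_pos hr0]
    simp
  rw [hcast, ← ENNReal.ofReal_pow (by positivity)]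
  refine ENNReal.ofReal_le_ofReal
    (one_add_pow_le_of_mul_le_log (by positivity) (zero_lt_one.trans hx) ?_)
  rw [div_le_iff₀ (Real.log_pos hx)] at hkr
  rwa [mul_div_assoc', div_le_iff₀' hr0, mul_comm (k : ℝ)]

end Assembly

/-- Every weighted undirected graph with positive edge weights on `n`
vertices has, for every `k ≥ 1` and `ε > 0`, a `(β, ε)`-hopset of size at most
`C · n^(1 + 1/(2^(k+1) - 1))` for an absolute constant `C`, where
`β = 2(r+1)^k` and `r = ⌈4k / ln(1+ε)⌉`. -/
theorem hopset_exists :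
    ∃ C : ℝ, 0 < C ∧
      ∀ (V : Type) [Fintype V] (w : V → V → ℝ≥0∞),
        (∀ u v : V, w u v = w v u) → (∀ u v : V, 0 < w u v) →
        ∀ k : ℕ, 1 ≤ k → ∀ ε : ℝ, 0 < ε →
          ∃ H : Finset (V × V),
            (H.card : ℝ) ≤
              C * (Fintype.card V : ℝ) ^ ((1 : ℝ) + 1 / ((2 : ℝ) ^ (k + 1) - 1)) ∧
            IsHopset w (↑H : Set (V × V))
              (2 * (⌈(4 * (k : ℝ)) / Real.log (1 + ε)⌉₊ + 1) ^ k) ε := by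
  refine ⟨6, by norm_num, fun V _ w hw hpos k hk ε hε => ?_⟩
  rcases isEmpty_or_nonempty V with hV | hV
  · exact ⟨∅, by rw [Finset.card_empty, Nat.cast_zero]; positivity, fun u => hV.elim u⟩
  obtain ⟨A, H, hA0, hAk, hcard, hH⟩ := exists_small_hierarchy (gdist w) k
  have hr : ⌈4 * (k : ℝ) / Real.log (1 + ε)⌉₊ ≠ 0 := by
    have hlog : 0 < Real.log (1 + ε) := Real.log_pos (by linarith)
    exact (Nat.ceil_pos.mpr (by positivity)).ne'
  have hstretch := one_add_four_div_pow_le_ofReal (by linarith : 1 < 1 + ε) hr (Nat.le_ceil _)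
  exact ⟨H, hcard, isHopset_of_hierarchy hw hpos hr hA0 hAk hH hstretch⟩
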